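/- arXiv:2201.00527 — 3 statements merged into one kernel-verified Lean document; each statement's English description precedes it below -/
import Mathlib

section
/- Let 0=t₀<t₁<⋯<t_N be time levels with positive steps τ_k = t_k − t_{k−1}, maximum step τ, and step ratios r_k = τ_k/τ_{k−1} (2≤k≤N), r₁ = 0. Suppose there is R' < R₃ with 0 < r_k ≤ R' for all 2 ≤ k ≤ N, where R₃ is the unique positive root of R⁶+R⁵−4R⁴−8R³−10R²−6R−2 = 0. Then there exists a constant C₃ > 0 depending only on R' (independent of N and of the step sizes) with the following property: if f : ℝ×ℝ → ℝ satisfies |f(t,u) − f(t,w)| ≤ L_f|u − w| with L_f > 0, {v^n}, {v̄^n} are real sequences, ṽ^n = v̄^n − v^n satisfies D₃ṽ^i = f(t_i, v̄^i) − f(t_i, v^i) + ε^i for 3 ≤ i ≤ N, and τ ≤ 1/(4C₃L_f), then for every 3 ≤ n ≤ N, |ṽ^n| ≤ 2·exp(4C₃L_f·t_{n−1})·(|ṽ^2| + 5C₃τ|∂_τṽ^2| + 2C₃τ|∂_τṽ^1| + 2C₃t_n·max_{3≤i≤n}|ε^i|). -/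
/-- BDF coefficient function `d₀(x,y)`. -/
noncomputable def d0 (x y : ℝ) : ℝ := (1 + 2*x)/(1 + x) + x*y/(1 + y + x*y)

/-- BDF coefficient function `d₁(x,y)`. -/
noncomputable def d1 (x y : ℝ) : ℝ :=
  -(x/(1 + x)) - x*y/(1 + y + x*y) - (x*y^2/(1 + y + x*y)) * ((1 + x)/(1 + y))

/-- BDF coefficient function `d₂(x,y)`. -/
noncomputable def d2 (x y : ℝ) : ℝ := (x*y^2/(1 + y + x*y)) * ((1 + x)/(1 + y))

/-!
The BDF3 relation is a three-term recursion for the difference quotients `wⁱ = ∂_τ vⁱ`. Since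
`d₀ + d₁ + d₂ = 1` it reads `wⁱ⁻¹ + d₀ (wⁱ - wⁱ⁻¹) - d₂ (wⁱ⁻¹ - wⁱ⁻²) = gⁱ`, and testing it with
`2 (wⁱ - wⁱ⁻¹)` gives an energy estimate for `‖wⁱ‖² + (weight) ‖wⁱ - wⁱ⁻¹‖²`. For step ratios up
to `13 / 5`, a rational slightly above `R₃ ≈ 2.58`, the damping `2 d₀ - 1` dominates the `d₂` terms
with room to spare, so the energy contracts at a uniform rate: its square root `eᵢ` satisfies
`eᵢ ≤ ρ eᵢ₋₁ + 4 ‖gⁱ‖` with `ρ = 499 / 500`. Together with `‖vⁱ‖ ≤ ‖vⁱ⁻¹‖ + τᵢ eᵢ` and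
`‖gⁱ‖ ≤ L ‖vⁱ‖ + δ` this is a linear system to which a discrete Gronwall argument applies, run on
the running maximum of `‖vⁱ‖`. The constant is given by `2 C₃ = 4 / (1 - ρ)`.
-/

open Finset Real
open scoped InnerProductSpace

section Gronwall

lemma one_le_one_sub_mul_exp {u : ℝ} (h0 : 0 ≤ u) (h1 : u ≤ 1 / 2) :
    1 ≤ (1 - u) * exp (2 * u) := by
  have hexp : 2 * u + 1 ≤ exp (2 * u) := add_one_le_exp _
  nlinarith

lemma le_exp_mul_of_le_add_mul_succ {n : ℕ} {u Y : ℕ → ℝ} (hu0 : ∀ k < n, 0 ≤ u k)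
    (hu1 : ∀ k < n, u k ≤ 1 / 2) (hY0 : 0 ≤ Y 0)
    (hY : ∀ k < n, Y (k + 1) ≤ Y k + u k * Y (k + 1)) :
    Y n ≤ exp (2 * ∑ k ∈ range n, u k) * Y 0 := by
  induction n with
  | zero => simp
  | succ n ih =>
    have ih := ih (fun k hk => hu0 k (by omega)) (fun k hk => hu1 k (by omega))
      fun k hk => hY k (by omega)
    have hn := hY n n.lt_succ_self
    have hlt : 0 < 1 - u n := by linarith [hu1 n n.lt_succ_self]
    refine le_of_mul_le_mul_left ?_ hlt
    calc (1 - u n) * Y (n + 1) ≤ Y n := by linarith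
      _ ≤ exp (2 * ∑ k ∈ range n, u k) * Y 0 := ih
      _ ≤ (1 - u n) * exp (2 * u n) * (exp (2 * ∑ k ∈ range n, u k) * Y 0) :=
        le_mul_of_one_le_left (by positivity)
          (one_le_one_sub_mul_exp (hu0 n n.lt_succ_self) (hu1 n n.lt_succ_self))
      _ = (1 - u n) * (exp (2 * ∑ k ∈ range (n + 1), u k) * Y 0) := by
        rw [sum_range_succ, mul_add, exp_add]; ring

-- The last step costs a factor `2` instead of `exp (2 * u m)`, so the exponent stops at `m`.
lemma le_two_mul_exp_mul_of_le_add_sum {m : ℕ} {u M : ℕ → ℝ} {A : ℝ} (hu0 : ∀ k < m + 1, 0 ≤ u k)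
    (hu1 : ∀ k < m + 1, u k ≤ 1 / 2) (hA : 0 ≤ A)
    (hM : ∀ k ≤ m + 1, M k ≤ A + ∑ j ∈ range k, u j * M (j + 1)) :
    M (m + 1) ≤ 2 * exp (2 * ∑ k ∈ range m, u k) * A := by
  set Y : ℕ → ℝ := fun k => A + ∑ j ∈ range k, u j * M (j + 1) with hYdef
  have hY : ∀ k < m + 1, Y (k + 1) ≤ Y k + u k * Y (k + 1) := fun k hk => by
    have hsucc : Y (k + 1) = Y k + u k * M (k + 1) := by
      simp only [hYdef, sum_range_succ, add_assoc]
    have := mul_le_mul_of_nonneg_left (hM (k + 1) hk) (hu0 k hk)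
    linarith
  have hY0 : Y 0 = A := by simp [hYdef]
  have hYm : Y m ≤ exp (2 * ∑ k ∈ range m, u k) * A := by
    rw [← hY0]
    exact le_exp_mul_of_le_add_mul_succ (fun k hk => hu0 k (by omega))
      (fun k hk => hu1 k (by omega)) (hY0 ▸ hA) fun k hk => hY k (by omega)
  have hlast := hY m m.lt_succ_self
  have hum := hu1 m m.lt_succ_self
  refine (hM (m + 1) le_rfl).trans (le_of_mul_le_mul_left ?_ (show 0 < 1 - u m by linarith))
  have hX : 0 ≤ exp (2 * ∑ k ∈ range m, u k) * A := by positivity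
  nlinarith [mul_le_mul_of_nonneg_right hum hX]

lemma le_pow_mul_add_of_le_convex_comb {n : ℕ} {e B : ℕ → ℝ} {ρ : ℝ} (hρ0 : 0 ≤ ρ) (hρ1 : ρ ≤ 1)
    (hB : Monotone B) (he : ∀ k < n, e (k + 1) ≤ ρ * e k + (1 - ρ) * B (k + 1)) :
    ∀ k ≤ n, e k ≤ ρ ^ k * e 0 + (1 - ρ ^ k) * B k := by
  intro k hk
  induction k with
  | zero => simp
  | succ k ih =>
    have hpow : 0 ≤ 1 - ρ ^ k := sub_nonneg.2 (pow_le_one₀ hρ0 hρ1)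
    calc e (k + 1) ≤ ρ * e k + (1 - ρ) * B (k + 1) := he k hk
      _ ≤ ρ * (ρ ^ k * e 0 + (1 - ρ ^ k) * B (k + 1)) + (1 - ρ) * B (k + 1) := by
        gcongr
        exact (ih (by omega)).trans (by gcongr; exact hB k.le_succ)
      _ = ρ ^ (k + 1) * e 0 + (1 - ρ ^ (k + 1)) * B (k + 1) := by ring

lemma sum_mul_pow_succ_le {n : ℕ} {T : ℕ → ℝ} {ρ τ : ℝ} (hρ0 : 0 ≤ ρ) (hρ1 : ρ < 1)
    (hτ : 0 ≤ τ) (hT : ∀ k < n, T k ≤ τ) :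
    ∑ k ∈ range n, T k * ρ ^ (k + 1) ≤ τ / (1 - ρ) := by
  have hgeom : ∑ k ∈ range n, ρ ^ k ≤ (1 - ρ)⁻¹ := by
    rw [← tsum_geometric_of_lt_one hρ0 hρ1]
    exact (summable_geometric_of_lt_one hρ0 hρ1).sum_le_tsum _ fun k _ => by positivity
  calc ∑ k ∈ range n, T k * ρ ^ (k + 1) ≤ ∑ k ∈ range n, τ * ρ ^ k :=
        sum_le_sum fun k hk => mul_le_mul (hT k (mem_range.1 hk))
          (pow_le_pow_of_le_one hρ0 hρ1.le k.le_succ) (by positivity) hτ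
    _ = τ * ∑ k ∈ range n, ρ ^ k := by rw [mul_sum]
    _ ≤ τ / (1 - ρ) := by rw [div_eq_mul_inv]; gcongr

variable {n : ℕ} {a e T : ℕ → ℝ} {ρ κ δ : ℝ}

lemma partialSups_le_add_sum (hρ0 : 0 ≤ ρ) (hρ1 : ρ ≤ 1) (hκ : 0 ≤ κ) (hδ : 0 ≤ δ)
    (ha0 : 0 ≤ a 0) (he0 : 0 ≤ e 0) (hT : ∀ k < n, 0 ≤ T k)
    (he : ∀ k < n, e (k + 1) ≤ ρ * e k + (1 - ρ) * (κ * a (k + 1) + δ))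
    (ha : ∀ k < n, a (k + 1) ≤ a k + T k * e (k + 1)) :
    ∀ k ≤ n, partialSups a k ≤
      a 0 + ∑ j ∈ range k, T j * (ρ ^ (j + 1) * e 0 + (κ * partialSups a (j + 1) + δ)) := by
  have hB : Monotone fun k => κ * partialSups a k + δ := fun i j hij => by
    have := (partialSups a).monotone hij
    dsimp only
    gcongr
  have hBnn : ∀ k, 0 ≤ κ * partialSups a k + δ := fun k => by
    have : 0 ≤ partialSups a k := ha0.trans (le_partialSups_of_le a k.zero_le)
    positivity
  have he' : ∀ k ≤ n, e k ≤ ρ ^ k * e 0 + (κ * partialSups a k + δ) := fun k hk =>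
    (le_pow_mul_add_of_le_convex_comb hρ0 hρ1 hB (fun j hj => (he j hj).trans <| by
      have := le_partialSups a (j + 1)
      have : 0 ≤ 1 - ρ := sub_nonneg.2 hρ1
      gcongr) k hk).trans <| by
      have := mul_le_of_le_one_left (hBnn k) (sub_le_self 1 (pow_nonneg hρ0 k))
      gcongr
  intro k hk
  induction k with
  | zero => simp
  | succ k ih =>
    have hstep : 0 ≤ T k * (ρ ^ (k + 1) * e 0 + (κ * partialSups a (k + 1) + δ)) :=
      mul_nonneg (hT k hk) (add_nonneg (by positivity) (hBnn _))
    have hinc := mul_le_mul_of_nonneg_left (he' (k + 1) hk) (hT k hk)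
    have ih := ih (by omega)
    rw [partialSups_add_one, sum_range_succ, ← add_assoc]
    exact sup_le (by linarith) (by linarith [ha k hk, le_partialSups a k])

lemma le_two_mul_exp_mul_of_le_mul_succ {m : ℕ} {τ : ℝ} (hρ0 : 0 ≤ ρ) (hρ1 : ρ < 1)
    (hκ : 0 ≤ κ) (hδ : 0 ≤ δ) (hκτ : κ * τ ≤ 1 / 2) (ha0 : 0 ≤ a 0) (he0 : 0 ≤ e 0)
    (hT : ∀ k < m + 1, 0 ≤ T k) (hTτ : ∀ k < m + 1, T k ≤ τ)
    (he : ∀ k < m + 1, e (k + 1) ≤ ρ * e k + (1 - ρ) * (κ * a (k + 1) + δ))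
    (ha : ∀ k < m + 1, a (k + 1) ≤ a k + T k * e (k + 1)) :
    a (m + 1) ≤ 2 * exp (2 * κ * ∑ k ∈ range m, T k) *
      (a 0 + τ / (1 - ρ) * e 0 + δ * ∑ k ∈ range (m + 1), T k) := by
  have hτ : 0 ≤ τ := (hT 0 m.succ_pos).trans (hTτ 0 m.succ_pos)
  have : 0 ≤ τ / (1 - ρ) := div_nonneg hτ (sub_nonneg.2 hρ1.le)
  have hsum : 0 ≤ ∑ k ∈ range (m + 1), T k := sum_nonneg fun k hk => hT k (mem_range.1 hk)
  have hM : ∀ k ≤ m + 1, partialSups a k ≤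
      (a 0 + τ / (1 - ρ) * e 0 + δ * ∑ k ∈ range (m + 1), T k) +
        ∑ j ∈ range k, κ * T j * partialSups a (j + 1) := fun k hk => by
    calc partialSups a k
        ≤ a 0 + ∑ j ∈ range k, T j * (ρ ^ (j + 1) * e 0 + (κ * partialSups a (j + 1) + δ)) :=
          partialSups_le_add_sum hρ0 hρ1.le hκ hδ ha0 he0 hT he ha k hk
      _ = a 0 + (∑ j ∈ range k, T j * ρ ^ (j + 1)) * e 0 + δ * ∑ j ∈ range k, T j +
          ∑ j ∈ range k, κ * T j * partialSups a (j + 1) := by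
        simp only [sum_mul, mul_sum, add_assoc, ← sum_add_distrib]
        congr 1
        exact sum_congr rfl fun j _ => by ring
      _ ≤ _ := by
        gcongr
        · exact sum_mul_pow_succ_le hρ0 hρ1 hτ fun j hj => hTτ j (by omega)
        · exact fun j hj _ => hT j (mem_range.1 hj)
  have hu : ∀ k < m + 1, κ * T k ≤ 1 / 2 := fun k hk =>
    (mul_le_mul_of_nonneg_left (hTτ k hk) hκ).trans hκτ
  have := le_two_mul_exp_mul_of_le_add_sum (fun k hk => mul_nonneg hκ (hT k hk)) hu
    (by positivity) hM
  rw [← mul_sum, ← mul_assoc] at this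
  exact (le_partialSups a (m + 1)).trans this

end Gronwall

section Coefficients

variable {x y : ℝ}

lemma div_one_add_le_div_one_add (hx : 0 ≤ x) (hxy : x ≤ y) : x / (1 + x) ≤ y / (1 + y) := by
  rw [div_le_div_iff₀ (by linarith) (by linarith)]
  linarith

lemma d2_eq_mul_div_one_add (hx : 0 ≤ x) (hy : 0 ≤ y) :
    d2 x y = x * (y / (1 + y)) * (y * (1 + x) / (1 + y * (1 + x))) := by
  unfold d2
  have : 1 + y + x * y ≠ 0 := by positivity
  have : 1 + y * (1 + x) ≠ 0 := by positivity
  field_simp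
  ring

lemma d2_nonneg (hx : 0 ≤ x) (hy : 0 ≤ y) : 0 ≤ d2 x y := by
  unfold d2
  positivity

lemma d2_mono {x' y' : ℝ} (hx : 0 ≤ x) (hy : 0 ≤ y) (hxx' : x ≤ x') (hyy' : y ≤ y') :
    d2 x y ≤ d2 x' y' := by
  have hx' : 0 ≤ x' := hx.trans hxx'
  have hy' : 0 ≤ y' := hy.trans hyy'
  rw [d2_eq_mul_div_one_add hx hy, d2_eq_mul_div_one_add hx' hy']
  have h1 := div_one_add_le_div_one_add hy hyy'
  have h2 : y * (1 + x) / (1 + y * (1 + x)) ≤ y' * (1 + x') / (1 + y' * (1 + x')) :=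
    div_one_add_le_div_one_add (by positivity) (by gcongr)
  gcongr

lemma d2_le_two (hx : 0 ≤ x) (hy : 0 ≤ y) (hx' : x ≤ 13 / 5) (hy' : y ≤ 13 / 5) :
    d2 x y ≤ 2 :=
  (d2_mono hx hy hx' hy').trans (by norm_num [d2])

lemma one_le_d0 (hx : 0 ≤ x) (hy : 0 ≤ y) : 1 ≤ d0 x y := by
  have h1 : 1 ≤ (1 + 2 * x) / (1 + x) := by rw [le_div_iff₀ (by positivity)]; linarith
  exact le_add_of_le_of_nonneg h1 (by positivity)

lemma d0_le_three (hx : 0 ≤ x) (hy : 0 ≤ y) : d0 x y ≤ 3 := by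
  have h1 : (1 + 2 * x) / (1 + x) ≤ 2 := by rw [div_le_iff₀ (by positivity)]; linarith
  have h2 : x * y / (1 + y + x * y) ≤ 1 := div_le_one_of_le₀ (by linarith) (by positivity)
  unfold d0
  linarith

lemma d1_eq_one_sub_d0_sub_d2 (hx : 0 ≤ x) (y : ℝ) : d1 x y = 1 - d0 x y - d2 x y := by
  have h : (1 + 2 * x) / (1 + x) = 1 + x / (1 + x) := by field_simp; ring
  rw [d0, d1, d2, h]
  ring

lemma d2_add_seven_tenths_le (hx : 0 ≤ x) (hx' : x ≤ 13 / 5) :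
    d2 (13 / 5) x + 7 / 10 ≤ 2 * ((1 + 2 * x) / (1 + x)) - 1 := by
  have hnum : 0 ≤ 3 / 10 + 169 / 50 * x - 27 / 25 * x ^ 2 := by nlinarith
  have hgap : 2 * ((1 + 2 * x) / (1 + x)) - 1 - (d2 (13 / 5) x + 7 / 10) =
      (3 / 10 + 169 / 50 * x - 27 / 25 * x ^ 2) / ((1 + x) * (1 + x + 13 / 5 * x)) := by
    unfold d2
    field_simp
    ring
  exact sub_nonneg.1 (hgap ▸ div_nonneg hnum (by positivity))

lemma d2_le_two_mul_add_two_fifths (hx : 0 ≤ x) (hy : 0 ≤ y) (hx' : x ≤ 13 / 5)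
    (hy' : y ≤ 13 / 5) : d2 x y ≤ 2 * (x * y / (1 + y + x * y)) + 2 / 5 := by
  have hnum : 0 ≤ x * y * (2 + y - x * y) + 2 / 5 * (1 + y + x * y) * (1 + y) := by
    -- Up to a nonnegative multiple of `13 / 5 - x` the numerator is affine in `x`.
    have hright : 0 ≤ 2 / 5 + 176 / 25 * y - 68 / 25 * y ^ 2 := by nlinarith
    have hinterp : x * y * (2 + y - x * y) + 2 / 5 * (1 + y + x * y) * (1 + y) =
        (13 / 5 - x) * (x * y ^ 2 + 2 / 13 * (1 + y) ^ 2) +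
          5 / 13 * x * (2 / 5 + 176 / 25 * y - 68 / 25 * y ^ 2) := by ring
    rw [hinterp]
    exact add_nonneg (mul_nonneg (sub_nonneg.2 hx') (by positivity)) (by positivity)
  have hgap : 2 * (x * y / (1 + y + x * y)) + 2 / 5 - d2 x y =
      (x * y * (2 + y - x * y) + 2 / 5 * (1 + y + x * y) * (1 + y)) /
        ((1 + y + x * y) * (1 + y)) := by
    unfold d2
    field_simp
    ring
  exact sub_nonneg.1 (hgap ▸ div_nonneg hnum (by positivity))

lemma d2_add_d2_add_three_tenths_le (hx : 0 ≤ x) (hy : 0 ≤ y) (hx' : x ≤ 13 / 5)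
    (hy' : y ≤ 13 / 5) : d2 x y + d2 (13 / 5) x + 3 / 10 ≤ 2 * d0 x y - 1 := by
  have h1 := d2_add_seven_tenths_le hx hx'
  have h2 := d2_le_two_mul_add_two_fifths hx hy hx' hy'
  unfold d0
  linarith

end Coefficients

lemma lt_thirteen_fifths_of_root {R : ℝ}
    (hR : R ^ 6 + R ^ 5 - 4 * R ^ 4 - 8 * R ^ 3 - 10 * R ^ 2 - 6 * R - 2 = 0) : R < 13 / 5 := by
  by_contra! h
  -- All coefficients of the Taylor expansion at `13 / 5` are positive.
  obtain ⟨s, hs, rfl⟩ : ∃ s : ℝ, 0 ≤ s ∧ R = s + 13 / 5 := ⟨R - 13 / 5, by linarith, by ring⟩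
  have hpos : 0 < (s + 13 / 5) ^ 6 + (s + 13 / 5) ^ 5 - 4 * (s + 13 / 5) ^ 4 -
      8 * (s + 13 / 5) ^ 3 - 10 * (s + 13 / 5) ^ 2 - 6 * (s + 13 / 5) - 2 := by
    ring_nf
    positivity
  exact hpos.ne' hR

section Energy

variable {E : Type*} [NormedAddCommGroup E]

/-- The Lyapunov function of the three-step recursion for the difference quotients: `x` is the
current step ratio, `a` and `b` are the last two quotients. As `d2` is increasing, the weight
`d2 (13 / 5) x` dominates every coefficient `d2 x' x` that the next step can bring in; the
extra `3 / 40` is what makes the energy contract. -/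
noncomputable def bdf3Energy (x : ℝ) (a b : E) : ℝ :=
  ‖a‖ ^ 2 + (d2 (13 / 5) x + 3 / 40) * ‖a - b‖ ^ 2

variable {x y : ℝ}

lemma sq_norm_le_bdf3Energy (hx : 0 ≤ x) (a b : E) : ‖a‖ ^ 2 ≤ bdf3Energy x a b := by
  have := d2_nonneg (x := 13 / 5) (by norm_num) hx
  exact le_add_of_nonneg_right (by positivity)

lemma sqrt_bdf3Energy_le (hx : 0 ≤ x) (hx' : x ≤ 13 / 5) (a b : E) :
    √(bdf3Energy x a b) ≤ 3 * ‖a‖ + 2 * ‖b‖ := by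
  have hd2 : d2 (13 / 5) x ≤ 2 := d2_le_two (by norm_num) hx le_rfl hx'
  refine sqrt_le_iff.2 ⟨by positivity, ?_⟩
  calc bdf3Energy x a b ≤ ‖a‖ ^ 2 + (2 + 3 / 40) * (‖a‖ + ‖b‖) ^ 2 := by
        unfold bdf3Energy
        gcongr
        exact norm_sub_le a b
    _ ≤ (3 * ‖a‖ + 2 * ‖b‖) ^ 2 := by nlinarith [norm_nonneg a, norm_nonneg b]

variable [InnerProductSpace ℝ E]

lemma two_mul_inner_sub_three_term (D q : ℝ) (a b c : E) :
    2 * ⟪a - b, D • a + (1 - D - q) • b + q • c⟫_ℝ =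
      ‖a‖ ^ 2 - ‖b‖ ^ 2 + (2 * D - 1) * ‖a - b‖ ^ 2 - 2 * q * ⟪a - b, b - c⟫_ℝ := by
  have hsplit : D • a + (1 - D - q) • b + q • c = b + D • (a - b) - q • (b - c) := by module
  have ha : ‖a‖ ^ 2 = ‖a - b‖ ^ 2 + 2 * ⟪a - b, b⟫_ℝ + ‖b‖ ^ 2 := by
    rw [← norm_add_sq_real, sub_add_cancel]
  rw [hsplit, inner_sub_right, inner_add_right, inner_smul_right, inner_smul_right,
    real_inner_self_eq_norm_sq, ha]
  ring

lemma sq_norm_add_mul_sq_norm_sub_le {q μ : ℝ} (hq : 0 ≤ q) (hμ : 0 < μ) (D : ℝ) (a b c : E) :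
    ‖a‖ ^ 2 + (2 * D - 1 - q - μ) * ‖a - b‖ ^ 2 ≤
      ‖b‖ ^ 2 + q * ‖b - c‖ ^ 2 + μ⁻¹ * ‖D • a + (1 - D - q) • b + q • c‖ ^ 2 := by
  have hid := two_mul_inner_sub_three_term D q a b c
  set g := D • a + (1 - D - q) • b + q • c
  have hcross : 2 * ⟪a - b, b - c⟫_ℝ ≤ ‖a - b‖ ^ 2 + ‖b - c‖ ^ 2 := by
    linarith [real_inner_le_norm (a - b) (b - c), two_mul_le_add_sq ‖a - b‖ ‖b - c‖]
  have hsource : 2 * ⟪a - b, g⟫_ℝ ≤ μ * ‖a - b‖ ^ 2 + μ⁻¹ * ‖g‖ ^ 2 := by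
    have hsq : 0 ≤ μ⁻¹ * (μ * ‖a - b‖ - ‖g‖) ^ 2 := by positivity
    have hexpand : μ⁻¹ * (μ * ‖a - b‖ - ‖g‖) ^ 2 =
        μ * ‖a - b‖ ^ 2 - 2 * (‖a - b‖ * ‖g‖) + μ⁻¹ * ‖g‖ ^ 2 := by field_simp; ring
    linarith [real_inner_le_norm (a - b) g]
  linarith [mul_le_mul_of_nonneg_left hcross hq]

lemma sq_norm_le_three_mul (D q : ℝ) (a b c : E) :
    ‖a‖ ^ 2 ≤ 3 * (‖D • a + (1 - D - q) • b + q • c‖ ^ 2 + (D - 1) ^ 2 * ‖a - b‖ ^ 2 +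
      q ^ 2 * ‖b - c‖ ^ 2) := by
  set g := D • a + (1 - D - q) • b + q • c with hg
  have ha : a = g - (D - 1) • (a - b) + q • (b - c) := by rw [hg]; module
  have htri : ‖a‖ ≤ ‖g‖ + |D - 1| * ‖a - b‖ + |q| * ‖b - c‖ := by
    calc ‖a‖ = ‖g - (D - 1) • (a - b) + q • (b - c)‖ := congrArg _ ha
      _ ≤ ‖g‖ + ‖(D - 1) • (a - b)‖ + ‖q • (b - c)‖ :=
        (norm_add_le _ _).trans (add_le_add_left (norm_sub_le _ _) _)
      _ = _ := by simp only [norm_smul, Real.norm_eq_abs]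
  calc ‖a‖ ^ 2 ≤ (‖g‖ + |D - 1| * ‖a - b‖ + |q| * ‖b - c‖) ^ 2 := by gcongr
    _ ≤ 3 * (‖g‖ ^ 2 + (|D - 1| * ‖a - b‖) ^ 2 + (|q| * ‖b - c‖) ^ 2) := by
      nlinarith [sq_nonneg (‖g‖ - |D - 1| * ‖a - b‖), sq_nonneg (‖g‖ - |q| * ‖b - c‖),
        sq_nonneg (|D - 1| * ‖a - b‖ - |q| * ‖b - c‖)]
    _ = _ := by simp only [mul_pow, sq_abs]

lemma bdf3Energy_contraction (hx : 0 ≤ x) (hy : 0 ≤ y) (hx' : x ≤ 13 / 5) (hy' : y ≤ 13 / 5)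
    (a b c : E) :
    201 / 200 * bdf3Energy x a b ≤
      bdf3Energy y b c + 14 * ‖d0 x y • a + d1 x y • b + d2 x y • c‖ ^ 2 := by
  rw [d1_eq_one_sub_d0_sub_d2 hx]
  have hD1 := one_le_d0 hx hy
  have hD3 := d0_le_three hx hy
  have hq0 := d2_nonneg hx hy
  have hq2 := d2_le_two hx hy hx' hy'
  have hdissip := sq_norm_add_mul_sq_norm_sub_le (μ := 3 / 40) hq0 (by norm_num) (d0 x y) a b c
  have hsize := sq_norm_le_three_mul (d0 x y) (d2 x y) a b c
  set g := d0 x y • a + (1 - d0 x y - d2 x y) • b + d2 x y • c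
  have hgap : (d2 (13 / 5) x + 9 / 40) * ‖a - b‖ ^ 2 ≤
      (2 * d0 x y - 1 - d2 x y - 3 / 40) * ‖a - b‖ ^ 2 := by
    gcongr
    linarith [d2_add_d2_add_three_tenths_le hx hy hx' hy']
  have hweight : d2 x y * ‖b - c‖ ^ 2 ≤ d2 (13 / 5) y * ‖b - c‖ ^ 2 := by
    gcongr
    exact d2_mono hx hy hx' le_rfl
  have hD : (d0 x y - 1) ^ 2 * ‖a - b‖ ^ 2 ≤ 4 * ‖a - b‖ ^ 2 := by gcongr; nlinarith
  have hq : d2 x y ^ 2 * ‖b - c‖ ^ 2 ≤ 4 * ‖b - c‖ ^ 2 := by gcongr; nlinarith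
  have hA : d2 (13 / 5) x * ‖a - b‖ ^ 2 ≤ 2 * ‖a - b‖ ^ 2 := by
    gcongr
    exact d2_le_two (by norm_num) hx le_rfl hx'
  -- `hdissip` leaves `3 / 20 * ‖a - b‖ ^ 2` and `3 / 40 * ‖b - c‖ ^ 2` unused; with `hsize` these
  -- pay for the fraction `1 / 200` of the energy of `a` and `b`.
  unfold bdf3Energy
  linarith [sq_nonneg ‖g‖, sq_nonneg ‖a - b‖, sq_nonneg ‖b - c‖]

lemma sqrt_bdf3Energy_contraction (hx : 0 ≤ x) (hy : 0 ≤ y) (hx' : x ≤ 13 / 5)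
    (hy' : y ≤ 13 / 5) (a b c : E) :
    √(bdf3Energy x a b) ≤ 499 / 500 * √(bdf3Energy y b c) +
      4 * ‖d0 x y • a + d1 x y • b + d2 x y • c‖ := by
  have hstep := bdf3Energy_contraction hx hy hx' hy' a b c
  set g := d0 x y • a + d1 x y • b + d2 x y • c
  have hF : 0 ≤ bdf3Energy y b c := (sq_nonneg ‖b‖).trans (sq_norm_le_bdf3Energy hy b c)
  refine sqrt_le_iff.2 ⟨by positivity, ?_⟩
  have hcross : 0 ≤ √(bdf3Energy y b c) * ‖g‖ := by positivity
  nlinarith [sq_sqrt hF, sq_nonneg ‖g‖]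

end Energy

section Scheme

/-- The step ratio `r_n = τ_n / τ_{n-1}`, meant for `2 ≤ n`. -/
noncomputable def stepRatio (τ : ℕ → ℝ) (n : ℕ) : ℝ := τ n / τ (n - 1)

variable {E : Type*} [AddCommGroup E] [Module ℝ E]

/-- The backward difference quotient `∂_τ vⁿ = (vⁿ - vⁿ⁻¹) / τ_n`, meant for `1 ≤ n`. -/
noncomputable def backwardDiff (τ : ℕ → ℝ) (v : ℕ → E) (n : ℕ) : E :=
  (τ n)⁻¹ • (v n - v (n - 1))

/-- The variable-step BDF3 operator `D₃ vⁿ`, meant for `3 ≤ n`. -/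
noncomputable def bdf3 (τ : ℕ → ℝ) (v : ℕ → E) (n : ℕ) : E :=
  d0 (stepRatio τ n) (stepRatio τ (n - 1)) • backwardDiff τ v n +
    d1 (stepRatio τ n) (stepRatio τ (n - 1)) • backwardDiff τ v (n - 1) +
    d2 (stepRatio τ n) (stepRatio τ (n - 1)) • backwardDiff τ v (n - 2)

end Scheme

lemma norm_succ_le_add_mul_sqrt_bdf3Energy {E : Type*} [NormedAddCommGroup E] [NormedSpace ℝ E]
    {τ : ℕ → ℝ} {n : ℕ} {x : ℝ} (hτ : 0 < τ (n + 1)) (hx : 0 ≤ x) (v : ℕ → E) (b : E) :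
    ‖v (n + 1)‖ ≤ ‖v n‖ + τ (n + 1) * √(bdf3Energy x (backwardDiff τ v (n + 1)) b) := by
  have hv : v (n + 1) = v n + τ (n + 1) • backwardDiff τ v (n + 1) := by
    simp [backwardDiff, smul_inv_smul₀ hτ.ne']
  calc ‖v (n + 1)‖ ≤ ‖v n‖ + ‖τ (n + 1) • backwardDiff τ v (n + 1)‖ := by
        conv_lhs => rw [hv]
        exact norm_add_le _ _
    _ = ‖v n‖ + τ (n + 1) * ‖backwardDiff τ v (n + 1)‖ := by
      rw [norm_smul, norm_of_nonneg hτ.le]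
    _ ≤ _ := by
      gcongr
      exact le_sqrt_of_sq_le (sq_norm_le_bdf3Energy hx _ b)

section Stability

variable {E : Type*} [NormedAddCommGroup E] [InnerProductSpace ℝ E]
  {τ : ℕ → ℝ} {v : ℕ → E} {τmax L δ : ℝ}

theorem norm_le_of_norm_bdf3_le {m : ℕ} (hτ0 : ∀ k, 1 ≤ k → k ≤ m + 3 → 0 < τ k)
    (hτ1 : ∀ k, 1 ≤ k → k ≤ m + 3 → τ k ≤ τmax)
    (hr : ∀ k, 2 ≤ k → k ≤ m + 3 → stepRatio τ k ≤ 13 / 5) (hL : 0 ≤ L) (hδ : 0 ≤ δ)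
    (hLτ : 4 * 1000 * L * τmax ≤ 1)
    (h : ∀ i, 3 ≤ i → i ≤ m + 3 → ‖bdf3 τ v i‖ ≤ L * ‖v i‖ + δ) :
    ‖v (m + 3)‖ ≤ 2 * exp (4 * 1000 * L * ∑ k ∈ range m, τ (k + 3)) *
      (‖v 2‖ + 5 * 1000 * τmax * ‖backwardDiff τ v 2‖ + 2 * 1000 * τmax * ‖backwardDiff τ v 1‖ +
        2 * 1000 * (∑ k ∈ range (m + 1), τ (k + 3)) * δ) := by
  have hr0 : ∀ k, 2 ≤ k → k ≤ m + 3 → 0 ≤ stepRatio τ k := fun k h2 hk =>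
    (div_pos (hτ0 k (by omega) hk) (hτ0 (k - 1) (by omega) (by omega))).le
  set w := backwardDiff τ v
  let e : ℕ → ℝ := fun k => √(bdf3Energy (stepRatio τ (k + 2)) (w (k + 2)) (w (k + 1)))
  have he : ∀ k < m + 1, e (k + 1) ≤
      499 / 500 * e k + (1 - 499 / 500) * (2000 * L * ‖v (k + 3)‖ + 2000 * δ) := fun k hk => by
    have hstep : e (k + 1) ≤ 499 / 500 * e k + 4 * ‖bdf3 τ v (k + 3)‖ :=
      sqrt_bdf3Energy_contraction (hr0 (k + 3) (by omega) (by omega))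
        (hr0 (k + 2) (by omega) (by omega)) (hr (k + 3) (by omega) (by omega))
        (hr (k + 2) (by omega) (by omega)) _ _ _
    linarith [h (k + 3) (by omega) (by omega)]
  have hv : ∀ k < m + 1, ‖v (k + 3)‖ ≤ ‖v (k + 2)‖ + τ (k + 3) * e (k + 1) := fun k hk =>
    norm_succ_le_add_mul_sqrt_bdf3Energy (hτ0 _ (by omega) (by omega))
      (hr0 _ (by omega) (by omega)) v _
  have hmain : ‖v (m + 3)‖ ≤ 2 * exp (2 * (2000 * L) * ∑ k ∈ range m, τ (k + 3)) *
      (‖v 2‖ + τmax / (1 - 499 / 500) * e 0 + 2000 * δ * ∑ k ∈ range (m + 1), τ (k + 3)) :=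
    le_two_mul_exp_mul_of_le_mul_succ (a := fun k => ‖v (k + 2)‖) (T := fun k => τ (k + 3))
      (by norm_num) (by norm_num) (by positivity) (by positivity) (by linarith) (norm_nonneg _)
      (sqrt_nonneg _) (fun k hk => (hτ0 _ (by omega) (by omega)).le)
      (fun k hk => hτ1 _ (by omega) (by omega)) he hv
  have hτmax : 0 ≤ τmax := (hτ0 1 le_rfl (by omega)).le.trans (hτ1 1 le_rfl (by omega))
  have he0 : τmax / (1 - 499 / 500) * e 0 ≤ 500 * τmax * (3 * ‖w 2‖ + 2 * ‖w 1‖) := by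
    rw [show τmax / (1 - 499 / 500) = 500 * τmax by ring]
    gcongr
    exact sqrt_bdf3Energy_le (hr0 2 le_rfl (by omega)) (hr 2 le_rfl (by omega)) _ _
  have hw1 : 0 ≤ τmax * ‖w 1‖ := by positivity
  have hw2 : 0 ≤ τmax * ‖w 2‖ := by positivity
  refine hmain.trans ?_
  rw [show 2 * (2000 * L) = 4 * 1000 * L by ring]
  gcongr ?_ * ?_
  linarith

theorem bdf3_stability_general {n : ℕ} (hn : 3 ≤ n) {t : ℕ → ℝ} (ht0 : t 0 = 0)
    (ht : ∀ k, 1 ≤ k → k ≤ n → t (k - 1) < t k) (hτ : ∀ k, 1 ≤ k → k ≤ n → τ k = t k - t (k - 1))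
    (hτmax : ∀ k, 1 ≤ k → k ≤ n → τ k ≤ τmax) (hr : ∀ k, 2 ≤ k → k ≤ n → stepRatio τ k ≤ 13 / 5)
    (hL : 0 ≤ L) {f : ℝ → E → E} (hf : ∀ s u w, ‖f s u - f s w‖ ≤ L * ‖u - w‖)
    {vbar ε : ℕ → E}
    (hv : ∀ i, 3 ≤ i → i ≤ n → bdf3 τ (vbar - v) i = f (t i) (vbar i) - f (t i) (v i) + ε i)
    (hLτ : 4 * 1000 * L * τmax ≤ 1) :
    ‖(vbar - v) n‖ ≤ 2 * exp (4 * 1000 * L * t (n - 1)) *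
      (‖(vbar - v) 2‖ + 5 * 1000 * τmax * ‖backwardDiff τ (vbar - v) 2‖ +
        2 * 1000 * τmax * ‖backwardDiff τ (vbar - v) 1‖ +
        2 * 1000 * t n * (Icc 3 n).sup' (nonempty_Icc.mpr hn) fun i => ‖ε i‖) := by
  obtain ⟨m, rfl⟩ := Nat.exists_eq_add_of_le' hn
  set δ := (Icc 3 (m + 3)).sup' (nonempty_Icc.mpr hn) fun i => ‖ε i‖
  have hε : ∀ i, 3 ≤ i → i ≤ m + 3 → ‖ε i‖ ≤ δ := fun i h3 hi =>
    le_sup' (fun i => ‖ε i‖) (mem_Icc.2 ⟨h3, hi⟩)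
  have hδ : 0 ≤ δ := (norm_nonneg _).trans (hε 3 le_rfl (by omega))
  have hτ0 : ∀ k, 1 ≤ k → k ≤ m + 3 → 0 < τ k := fun k h1 hk => by
    linarith [hτ k h1 hk, ht k h1 hk]
  have hτmax0 : 0 ≤ τmax := (hτ0 1 le_rfl (by omega)).le.trans (hτmax 1 le_rfl (by omega))
  have ht2 : 0 ≤ t 2 := by linarith [ht 1 le_rfl (by omega), ht 2 (by omega) (by omega)]
  have hsum0 : 0 ≤ ∑ j ∈ range (m + 1), τ (j + 3) := sum_nonneg fun j hj =>
    (hτ0 _ (by omega) (by have := mem_range.1 hj; omega)).le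
  have hsum : ∀ k ≤ m + 1, ∑ j ∈ range k, τ (j + 3) ≤ t (k + 2) := fun k hk => by
    have htele : ∑ j ∈ range k, τ (j + 3) = t (k + 2) - t 2 := by
      rw [← sum_range_sub (fun j => t (j + 2))]
      exact sum_congr rfl fun j hj =>
        hτ (j + 3) (by omega) (by have := mem_range.1 hj; omega)
    linarith
  have hbdf3 : ∀ i, 3 ≤ i → i ≤ m + 3 →
      ‖bdf3 τ (vbar - v) i‖ ≤ L * ‖(vbar - v) i‖ + δ := fun i h3 hi => by
    grw [hv i h3 hi, norm_add_le, hf, hε i h3 hi]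
    rfl
  refine (norm_le_of_norm_bdf3_le hτ0 hτmax hr hL hδ hLτ hbdf3).trans ?_
  gcongr
  exacts [hsum m (by omega), hsum (m + 1) le_rfl]

end Stability

/-- Stability of the variable-step BDF3 method (Theorem 3.1): if all step ratios satisfy
`0 < r_k ≤ R' < R₃`, where `R₃` is the unique positive root of
`R⁶+R⁵-4R⁴-8R³-10R²-6R-2 = 0`, then there is a constant `C₃ > 0` depending only on `R'`
such that, whenever `τ ≤ 1/(4 C₃ L_f)`, for `3 ≤ n ≤ N`,
`|ṽⁿ| ≤ 2 exp(4C₃L_f t_{n-1})(|ṽ²| + 5C₃τ|∂_τṽ²| + 2C₃τ|∂_τṽ¹| + 2C₃ t_n max_{3≤i≤n}|εⁱ|)`. -/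
theorem bdf3_stability (R' R3 : ℝ) (hR3pos : 0 < R3)
    (hR3root : R3^6 + R3^5 - 4*R3^4 - 8*R3^3 - 10*R3^2 - 6*R3 - 2 = 0)
    (hR3uniq : ∀ x : ℝ, 0 < x → x^6 + x^5 - 4*x^4 - 8*x^3 - 10*x^2 - 6*x - 2 = 0 → x = R3)
    (hR' : R' < R3) :
    ∃ C3 : ℝ, 0 < C3 ∧
      ∀ (N : ℕ), 3 ≤ N →
      ∀ (t : ℕ → ℝ), t 0 = 0 →
      (∀ k, 1 ≤ k → k ≤ N → t (k - 1) < t k) →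
      ∀ (τ : ℕ → ℝ), (∀ k, 1 ≤ k → k ≤ N → τ k = t k - t (k - 1)) →
      ∀ (τmax : ℝ), (∀ k, 1 ≤ k → k ≤ N → τ k ≤ τmax) →
      ∀ (r : ℕ → ℝ), r 1 = 0 → (∀ k, 2 ≤ k → k ≤ N → r k = τ k / τ (k - 1)) →
      (∀ k, 2 ≤ k → k ≤ N → 0 < r k ∧ r k ≤ R') →
      ∀ (Lf : ℝ), 0 < Lf →
      ∀ (f : ℝ → ℝ → ℝ), (∀ s u w : ℝ, |f s u - f s w| ≤ Lf * |u - w|) →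
      ∀ (v vbar ε vt : ℕ → ℝ), (∀ n, vt n = vbar n - v n) →
      (∀ i, 3 ≤ i → i ≤ N →
        d0 (r i) (r (i - 1)) * ((vt i - vt (i - 1)) / τ i)
          + d1 (r i) (r (i - 1)) * ((vt (i - 1) - vt (i - 2)) / τ (i - 1))
          + d2 (r i) (r (i - 1)) * ((vt (i - 2) - vt (i - 3)) / τ (i - 2))
          = f (t i) (vbar i) - f (t i) (v i) + ε i) →
      τmax ≤ 1/(4*C3*Lf) →
      ∀ n, ∀ hn : 3 ≤ n, n ≤ N →
        |vt n| ≤ 2 * Real.exp (4*C3*Lf*t (n - 1)) *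
          (|vt 2| + 5*C3*τmax*|(vt 2 - vt 1)/τ 2| + 2*C3*τmax*|(vt 1 - vt 0)/τ 1|
            + 2*C3*t n * (Finset.Icc 3 n).sup' (Finset.nonempty_Icc.mpr hn) (fun i => |ε i|)) := by
  have hR : R' ≤ 13 / 5 := (hR'.trans (lt_thirteen_fifths_of_root hR3root)).le
  refine ⟨1000, by norm_num, fun N _ t ht0 ht τ hτ τmax hτmax r _ hr hrR Lf hLf f hf v vbar ε vt
    hvt hD hsmall n hn hnN => ?_⟩
  obtain rfl : vt = vbar - v := funext hvt
  have hrτ : ∀ k, 2 ≤ k → k ≤ n → stepRatio τ k = r k := fun k h2 hk =>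
    (hr k h2 (hk.trans hnN)).symm
  have hbdf3 : ∀ i, 3 ≤ i → i ≤ n →
      bdf3 τ (vbar - v) i = f (t i) (vbar i) - f (t i) (v i) + ε i := fun i h3 hi => by
    rw [← hD i h3 (hi.trans hnN), bdf3, hrτ i (by omega) hi, hrτ (i - 1) (by omega) (by omega)]
    simp only [backwardDiff, smul_eq_mul, ← div_eq_inv_mul, Nat.sub_sub, Nat.reduceAdd]
  have hLτ : 4 * 1000 * Lf * τmax ≤ 1 := by
    rwa [le_div_iff₀ (by positivity), mul_comm] at hsmall
  simpa only [backwardDiff, smul_eq_mul, ← div_eq_inv_mul, norm_eq_abs, Nat.reduceSub] using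
    bdf3_stability_general hn ht0 (fun k h1 hk => ht k h1 (hk.trans hnN))
      (fun k h1 hk => hτ k h1 (hk.trans hnN)) (fun k h1 hk => hτmax k h1 (hk.trans hnN))
      (fun k h2 hk => (hrτ k h2 hk).trans_le ((hrR k h2 (hk.trans hnN)).2.trans hR)) hLf.le hf
      hbdf3 hLτ
end

section
/- Let r_k > 0 (k ≥ 2) be step ratios, and let ϑ^{(2,n)}_{n−j} be the DOC kernels associated with the BDF2 kernels d^{(2,n)}_0 = d₀(r_n,0), d^{(2,n)}_1 = d₁(r_n,0), d^{(2,n)}_j = 0 (j ≥ 2), defined by ϑ^{(2,n)}_0 = 1/d^{(2,n)}_0 and ϑ^{(2,n)}_{n−j} = −(1/d^{(2,j)}_0)·Σ_{i=j+1}^{n} ϑ^{(2,n)}_{n−i} d^{(2,i)}_{i−j} for 2 ≤ j ≤ n−1. Then for every n ≥ 2, Σ_{j=2}^{n} ϑ^{(2,n)}_{n−j} = 1 − ∏_{i=2}^{n} r_i/(1+2r_i) < 1. -/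
/-- The BDF2 kernels `d^{(2,n)}_j`: `d^{(2,n)}_0 = d₀(r_n,0)`, `d^{(2,n)}_1 = d₁(r_n,0)`,
and `d^{(2,n)}_j = 0` for `j ≥ 2`. -/
noncomputable def dk2 (r : ℕ → ℝ) (n j : ℕ) : ℝ :=
  if j = 0 then d0 (r n) 0 else if j = 1 then d1 (r n) 0 else 0

/-!
Both kernels `d₀(r, 0) = (1 + 2r)/(1 + r)` and `d₁(r, 0) = -r/(1 + r)` of a row add up to `1`
(consistency of the scheme), so with `q = -d₁/d₀ = r/(1 + 2r)` one has `1/d₀ = 1 - q`. The kernels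
being bidiagonal, the DOC recursion has two terms and unrolls to
`ϑ^{(n)}_{n-j} = (1 - q_j) q_{j+1} ⋯ q_n`; the sum over `j` telescopes.
-/

open Finset

theorem sum_one_sub_mul_prod_filter_lt {ι R : Type*} [LinearOrder ι] [CommRing R]
    (s : Finset ι) (q : ι → R) :
    ∑ i ∈ s, (1 - q i) * ∏ j ∈ s with i < j, q j = 1 - ∏ i ∈ s, q i := by
  have expansion := prod_add_ordered s q (fun i => 1 - q i)
  simp only [add_sub_cancel, prod_const_one, mul_one] at expansion
  exact eq_sub_of_add_eq' expansion.symm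

/-- The discrete orthogonal convolution (DOC) kernels of the kernels `d n j = d^{(n)}_j`, where
`ϑ n j` encodes `ϑ^{(n)}_{n-j}` and the time levels start at `m`. -/
structure IsDOCKernel {K : Type*} [Field K] (m : ℕ) (d ϑ : ℕ → ℕ → K) : Prop where
  diag : ∀ n, m ≤ n → ϑ n n = 1 / d n 0
  recurrence : ∀ n j, m ≤ j → j < n →
    ϑ n j = -(1 / d j 0) * ∑ i ∈ Icc (j + 1) n, ϑ n i * d i (i - j)

namespace IsDOCKernel

variable {K : Type*} [Field K] {m : ℕ} {d ϑ : ℕ → ℕ → K}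

lemma eq_mul_succ_of_bidiagonal (h : IsDOCKernel m d ϑ) (hd : ∀ n j, 2 ≤ j → d n j = 0)
    {j n : ℕ} (hmj : m ≤ j) (hjn : j < n) :
    ϑ n j = 1 / d j 0 * (-d (j + 1) 1 * ϑ n (j + 1)) := by
  have sum_eq : ∑ i ∈ Icc (j + 1) n, ϑ n i * d i (i - j) = ϑ n (j + 1) * d (j + 1) 1 := by
    rw [sum_eq_single_of_mem (j + 1) (left_mem_Icc.2 hjn), Nat.add_sub_cancel_left]
    intro i hi hne
    rw [hd i (i - j) (by grind), mul_zero]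
  rw [h.recurrence n j hmj hjn, sum_eq]
  ring

lemma eq_mul_prod_of_bidiagonal (h : IsDOCKernel m d ϑ) (hd : ∀ n j, 2 ≤ j → d n j = 0)
    {j n : ℕ} (hmj : m ≤ j) (hjn : j ≤ n) :
    ϑ n j = 1 / d j 0 * ∏ i ∈ Ioc j n, -d i 1 / d i 0 := by
  induction hjn using Nat.decreasingInduction with
  | self => rw [h.diag n hmj, Ioc_self, prod_empty, mul_one]
  | of_succ j hjn ih =>
    rw [h.eq_mul_succ_of_bidiagonal hd hmj hjn, ih (hmj.trans j.le_succ),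
      ← prod_Ioc_consecutive _ j.le_succ hjn, Nat.Ioc_succ_singleton, prod_singleton]
    ring

theorem sum_eq_one_sub_prod_of_bidiagonal (h : IsDOCKernel m d ϑ)
    (hd : ∀ n j, 2 ≤ j → d n j = 0)
    (hd_ne : ∀ n, m ≤ n → d n 0 ≠ 0) (hd_add : ∀ n, m ≤ n → d n 0 + d n 1 = 1) (n : ℕ) :
    ∑ j ∈ Icc m n, ϑ n j = 1 - ∏ i ∈ Icc m n, -d i 1 / d i 0 := by
  rw [← sum_one_sub_mul_prod_filter_lt]
  refine sum_congr rfl fun j hj => ?_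
  obtain ⟨hmj, hjn⟩ := mem_Icc.1 hj
  have one_div_eq : 1 / d j 0 = 1 - -d j 1 / d j 0 := by
    rw [eq_sub_iff_add_eq, ← add_div, div_eq_one_iff_eq (hd_ne j hmj)]
    exact add_neg_eq_iff_eq_add.2 (hd_add j hmj).symm
  have filter_eq : (Icc m n).filter (j < ·) = Ioc j n := by grind
  rw [h.eq_mul_prod_of_bidiagonal hd hmj hjn, one_div_eq, filter_eq]

end IsDOCKernel

section BDF2

variable (r : ℕ → ℝ)

lemma dk2_zero (n : ℕ) : dk2 r n 0 = (1 + 2 * r n) / (1 + r n) := by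
  simp [dk2, d0]

lemma dk2_one (n : ℕ) : dk2 r n 1 = -(r n / (1 + r n)) := by
  simp [dk2, d1]

lemma dk2_eq_zero_of_two_le (n j : ℕ) (hj : 2 ≤ j) : dk2 r n j = 0 := by
  rw [dk2, if_neg (by lia), if_neg (by lia)]

variable {r} {n : ℕ}

lemma dk2_zero_add_dk2_one (h : 1 + r n ≠ 0) : dk2 r n 0 + dk2 r n 1 = 1 := by
  rw [dk2_zero, dk2_one]
  field_simp
  ring

lemma neg_dk2_one_div_dk2_zero (h : 1 + r n ≠ 0) :
    -dk2 r n 1 / dk2 r n 0 = r n / (1 + 2 * r n) := by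
  rw [dk2_zero, dk2_one, neg_neg, div_div_div_cancel_right₀ h]

theorem sum_bdf2_doc_eq_one_sub_prod {m : ℕ} {ϑ : ℕ → ℕ → ℝ} (hϑ : IsDOCKernel m (dk2 r) ϑ)
    (h₁ : ∀ k, m ≤ k → 1 + r k ≠ 0) (h₂ : ∀ k, m ≤ k → 1 + 2 * r k ≠ 0) (n : ℕ) :
    ∑ j ∈ Icc m n, ϑ n j = 1 - ∏ i ∈ Icc m n, r i / (1 + 2 * r i) := by
  have hd_ne (k : ℕ) (hk : m ≤ k) : dk2 r k 0 ≠ 0 := by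
    rw [dk2_zero]
    exact div_ne_zero (h₂ k hk) (h₁ k hk)
  rw [hϑ.sum_eq_one_sub_prod_of_bidiagonal (dk2_eq_zero_of_two_le r) hd_ne
    (fun k hk => dk2_zero_add_dk2_one (h₁ k hk))]
  congr 1
  exact prod_congr rfl fun i hi => neg_dk2_one_div_dk2_zero (h₁ i (mem_Icc.1 hi).1)

end BDF2

/-- Sum identity for the BDF2 DOC kernels (Lemma 2.1): writing `ϑ n j` for `ϑ^{(2,n)}_{n-j}`,
one has `Σ_{j=2}^n ϑ^{(2,n)}_{n-j} = 1 - ∏_{i=2}^n r_i/(1+2r_i) < 1` for every `n ≥ 2`. -/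
theorem bdf2_doc_sum
    (r : ℕ → ℝ) (hr : ∀ k, 2 ≤ k → 0 < r k)
    (ϑ : ℕ → ℕ → ℝ)
    (hϑdiag : ∀ n, 2 ≤ n → ϑ n n = 1 / dk2 r n 0)
    (hϑrec : ∀ n j, 2 ≤ j → j < n →
      ϑ n j = -(1 / dk2 r j 0) * ∑ i ∈ Finset.Icc (j+1) n, ϑ n i * dk2 r i (i - j)) :
    ∀ n, 2 ≤ n →
      (∑ j ∈ Finset.Icc 2 n, ϑ n j) = 1 - ∏ i ∈ Finset.Icc 2 n, r i / (1 + 2 * r i)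
        ∧ (∑ j ∈ Finset.Icc 2 n, ϑ n j) < 1 := by
  intro n _
  have hϑ : IsDOCKernel 2 (dk2 r) ϑ := ⟨hϑdiag, hϑrec⟩
  have sum_eq : ∑ j ∈ Icc 2 n, ϑ n j = 1 - ∏ i ∈ Icc 2 n, r i / (1 + 2 * r i) :=
    sum_bdf2_doc_eq_one_sub_prod hϑ (fun k hk => by have := hr k hk; positivity)
      (fun k hk => by have := hr k hk; positivity) n
  have prod_ratio_pos : 0 < ∏ i ∈ Icc 2 n, r i / (1 + 2 * r i) := by
    refine prod_pos fun i hi => ?_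
    have := hr i (mem_Icc.1 hi).1
    positivity
  exact ⟨sum_eq, sum_eq.trans_lt (sub_lt_self 1 prod_ratio_pos)⟩
end

section
/- Let R₃ be the unique positive root of R⁶+R⁵−4R⁴−8R³−10R²−6R−2 = 0, and suppose the step ratios satisfy 0 < r_k ≤ R' for all k ≥ 2, for some fixed R' < R₃. Let ϑ^{(3,n)}_{n−j} be the DOC kernels associated with the BDF3 kernels d^{(3,n)}_j = d_j(r_n,r_{n−1}) (j = 0,1,2), d^{(3,n)}_j = 0 (j ≥ 3), defined by ϑ^{(3,n)}_0 = 1/d^{(3,n)}_0 and ϑ^{(3,n)}_{n−j} = −(1/d^{(3,j)}_0)·Σ_{i=j+1}^{n} ϑ^{(3,n)}_{n−i} d^{(3,i)}_{i−j} for 3 ≤ j ≤ n−1. Then there exist constants c > 0 and δ ∈ (0,1), depending only on R', such that |ϑ^{(3,n)}_{n−j}| ≤ c·δ^{n−j−1} for all n ≥ j+2 ≥ 5. Moreover ϑ^{(3,j)}_0 = 1/d^{(3,j)}_0 ∈ (0,1] and ϑ^{(3,j+1)}_1 ∈ (0,2] for all j ≥ 3. -/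
/-- The BDF3 kernels `d^{(3,n)}_j = d_j(r_n, r_{n-1})` for `j = 0,1,2`
and `d^{(3,n)}_j = 0` for `j ≥ 3`. -/
noncomputable def dk3 (r : ℕ → ℝ) (n j : ℕ) : ℝ :=
  if j = 0 then d0 (r n) (r (n - 1))
  else if j = 1 then d1 (r n) (r (n - 1))
  else if j = 2 then d2 (r n) (r (n - 1))
  else 0

/-!
Multiplied by `d₀`, the kernels `ϑ^{(3,n)}_{n-j}` satisfy a two-term linear recursion running
backwards in `j` from `n`. As `d₀ + d₁ + d₂ = 1`, its companion matrix depends only on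
`t = 1 - 1 / d₀` and `b = d₂ / d₀`, and it is affine in `(t, b)`. Ratios in `(0, 64/25]` keep
`(t, b)` in a fixed triangle. One quadratic form is contracted by the companion matrices at all
three vertices, hence by convexity at every point of the triangle, so it decays geometrically along
the recursion. The sextic is positive beyond `64/25`, so `R₃ ≤ 64/25`.
-/

section Coefficients

variable {x y R : ℝ}

lemma d0_eq_one_add (hx : 1 + x ≠ 0) : d0 x y = 1 + x / (1 + x) + x * y / (1 + y + x * y) := by
  unfold d0
  field_simp
  ring

lemma d0_add_d1_add_d2 (hx : 1 + x ≠ 0) : d0 x y + d1 x y + d2 x y = 1 := by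
  rw [d0_eq_one_add hx]
  unfold d1 d2
  ring

lemma one_lt_d0 (hx : 0 < x) (hy : 0 < y) : 1 < d0 x y := by
  rw [d0_eq_one_add (by positivity), add_assoc]
  exact lt_add_of_pos_right 1 (by positivity)

lemma d2_pos (hx : 0 < x) (hy : 0 < y) : 0 < d2 x y := by
  unfold d2
  positivity

lemma div_add_self_le_div_add_self {a b k : ℝ} (ha : 0 ≤ a) (hab : a ≤ b) (hk : 0 < k) :
    a / (k + a) ≤ b / (k + b) := by
  rw [div_le_div_iff₀ (by positivity) (by linarith)]
  linarith [mul_le_mul_of_nonneg_left hab hk.le]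

lemma d0_le_d0_diag (hx : 0 < x) (hy : 0 < y) (hxR : x ≤ R) (hyR : y ≤ R) : d0 x y ≤ d0 R R := by
  have hR : 0 < R := hx.trans_le hxR
  rw [d0_eq_one_add (by positivity), d0_eq_one_add (by positivity)]
  gcongr 1 + ?_ + ?_
  · exact div_add_self_le_div_add_self hx.le hxR one_pos
  · have hxy : x * y ≤ R * R := by gcongr
    have hxyR : x * y * R ≤ R * R * y := by nlinarith [mul_pos hy hR]
    rw [div_le_div_iff₀ (by positivity) (by positivity)]
    linarith

-- The quotient `d2 / (d0 - 1)` is split into factors nondecreasing in `x` and in `y`.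
lemma d2_eq_mul_d0_sub_one (hx : 0 < x) (hy : 0 < y) :
    d2 x y = (1 + x) * (y / (1 + y)) * (y * (1 + x) / (1 / 2 + y * (1 + x))) / 2
      * (d0 x y - 1) := by
  unfold d0 d2
  field_simp
  ring

lemma d2_le_mul_d0_sub_one (hx : 0 < x) (hy : 0 < y) (hxR : x ≤ R) (hyR : y ≤ R) :
    d2 x y ≤ R ^ 2 * (1 + R) / (1 + 2 * R + 2 * R ^ 2) * (d0 x y - 1) := by
  have hR : 0 < R := hx.trans_le hxR
  have hd0 : 0 ≤ d0 x y - 1 := (sub_pos.2 (one_lt_d0 hx hy)).le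
  have hy_div : y / (1 + y) ≤ R / (1 + R) := div_add_self_le_div_add_self hy.le hyR one_pos
  have hxy_div : y * (1 + x) / (1 / 2 + y * (1 + x)) ≤ R * (1 + R) / (1 / 2 + R * (1 + R)) :=
    div_add_self_le_div_add_self (by positivity) (by gcongr) (by norm_num)
  calc d2 x y
      = (1 + x) * (y / (1 + y)) * (y * (1 + x) / (1 / 2 + y * (1 + x))) / 2 * (d0 x y - 1) :=
        d2_eq_mul_d0_sub_one hx hy
    _ ≤ (1 + R) * (R / (1 + R)) * (R * (1 + R) / (1 / 2 + R * (1 + R))) / 2 * (d0 x y - 1) := by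
        gcongr
    _ = R ^ 2 * (1 + R) / (1 + 2 * R + 2 * R ^ 2) * (d0 x y - 1) := by
        field_simp
        ring

lemma d0_le_of_mem_Ioc (hx : x ∈ Set.Ioc 0 (64 / 25)) (hy : y ∈ Set.Ioc 0 (64 / 25)) :
    d0 x y ≤ 2369 / 1000 :=
  (d0_le_d0_diag hx.1 hy.1 hx.2 hy.2).trans (by norm_num [d0])

lemma d2_le_of_mem_Ioc (hx : x ∈ Set.Ioc 0 (64 / 25)) (hy : y ∈ Set.Ioc 0 (64 / 25)) :
    d2 x y ≤ 607 / 500 * (d0 x y - 1) := by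
  refine (d2_le_mul_d0_sub_one hx.1 hy.1 hx.2 hy.2).trans ?_
  exact mul_le_mul_of_nonneg_right (by norm_num) (sub_pos.2 (one_lt_d0 hx.1 hy.1)).le

lemma neg_d1_mem_Ioc (hx : x ∈ Set.Ioc 0 (64 / 25)) (hy : y ∈ Set.Ioc 0 (64 / 25)) :
    -d1 x y ∈ Set.Ioc 0 (2 * d0 x y) := by
  have h_sum := d0_add_d1_add_d2 (x := x) (y := y) (by linarith [hx.1])
  constructor
  · linarith [one_lt_d0 hx.1 hy.1, d2_pos hx.1 hy.1]
  · linarith [d0_le_of_mem_Ioc hx hy, d2_le_of_mem_Ioc hx hy]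

end Coefficients

section Energy

/-- The Lyapunov function of the backward recursion for the DOC kernels, a positive definite
quadratic form. The coefficients `9/10` and `101/100` were found numerically: they make the form
contract at the three vertices `(0, 0)`, `(t₀, 0)` and `(t₀, κ t₀)` of the triangle of parameters
`(t, b)`, where `t₀ = 289/500` and `κ = 607/500`. -/
noncomputable def energy (g h : ℝ) : ℝ := (g - 9 / 10 * h) ^ 2 + 101 / 100 * h ^ 2

lemma sq_le_four_mul_energy (g h : ℝ) : g ^ 2 ≤ 4 * energy g h := by
  unfold energy
  nlinarith [sq_nonneg (g - 2 * h), sq_nonneg h]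

lemma convexOn_energy : ConvexOn ℝ Set.univ fun v : ℝ × ℝ => energy v.1 v.2 := by
  have h_sq : ConvexOn ℝ Set.univ fun x : ℝ => x ^ 2 := even_two.convexOn_pow
  have h_fst := h_sq.comp_linearMap (LinearMap.fst ℝ ℝ ℝ - (9 / 10 : ℝ) • LinearMap.snd ℝ ℝ ℝ)
  have h_snd := h_sq.comp_linearMap (LinearMap.snd ℝ ℝ ℝ)
  exact h_fst.add (h_snd.smul (by norm_num : (0 : ℝ) ≤ 101 / 100))

lemma energy_le_of_mem_Icc {s T a b c d M : ℝ} (hs : s ∈ Set.Icc 0 T) (h_zero : energy a b ≤ M)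
    (h_end : energy (a + T * c) (b + T * d) ≤ M) : energy (a + s * c) (b + s * d) ≤ M := by
  have hconv : ConvexOn ℝ Set.univ fun u : ℝ => energy (a + u * c) (b + u * d) := by
    simpa [Function.comp_def, AffineMap.lineMap_apply, add_comm] using
      convexOn_energy.comp_affineMap (AffineMap.lineMap (a, b) (a + c, b + d))
  refine (hconv.le_max_of_mem_Icc trivial trivial hs).trans (max_le ?_ h_end)
  simpa using h_zero

lemma energy_origin_le (g h : ℝ) : energy (-h) 0 ≤ (999 / 1000) ^ 2 * energy g h := by
  unfold energy
  nlinarith [sq_nonneg (g - 9 / 10 * h), sq_nonneg h]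

lemma energy_right_le (g h : ℝ) :
    energy (-h + 289 / 500 * g) 0 ≤ (999 / 1000) ^ 2 * energy g h := by
  unfold energy
  nlinarith [sq_nonneg (g - 1 / 2 * h), sq_nonneg h]

lemma energy_top_le (g h : ℝ) :
    energy (-h + 289 / 500 * ((1 + 607 / 500) * g)) (289 / 500 * (607 / 500 * g))
      ≤ (999 / 1000) ^ 2 * energy g h := by
  unfold energy
  nlinarith [sq_nonneg (g - 3 * h), sq_nonneg h]

lemma energy_companion_le {t b : ℝ} (hb : 0 ≤ b) (hbt : b ≤ 607 / 500 * t) (ht : t ≤ 289 / 500)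
    (g h : ℝ) : energy ((t + b) * g - h) (b * g) ≤ (999 / 1000) ^ 2 * energy g h := by
  have ht_mem : t ∈ Set.Icc 0 (289 / 500) := ⟨by linarith, ht⟩
  have h_bottom : energy (-h + t * g) (0 + t * 0) ≤ (999 / 1000) ^ 2 * energy g h :=
    energy_le_of_mem_Icc ht_mem (energy_origin_le g h) (by simpa using energy_right_le g h)
  have h_slanted : energy (-h + t * ((1 + 607 / 500) * g)) (0 + t * (607 / 500 * g))
      ≤ (999 / 1000) ^ 2 * energy g h :=
    energy_le_of_mem_Icc ht_mem (energy_origin_le g h) (by simpa using energy_top_le g h)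
  have h_vertical := energy_le_of_mem_Icc (c := g) (d := g) ⟨hb, hbt⟩ h_bottom
    (by convert h_slanted using 2 <;> ring)
  convert h_vertical using 2 <;> ring

lemma energy_step_le {x y : ℝ} (hx : x ∈ Set.Ioc 0 (64 / 25)) (hy : y ∈ Set.Ioc 0 (64 / 25))
    (f h : ℝ) :
    energy (-(d1 x y * f) - h) (d2 x y * f) ≤ (999 / 1000) ^ 2 * energy (d0 x y * f) h := by
  have hd0 : 1 < d0 x y := one_lt_d0 hx.1 hy.1
  have hd0_pos : 0 < d0 x y := one_pos.trans hd0
  have hb : 0 ≤ d2 x y / d0 x y := (div_pos (d2_pos hx.1 hy.1) hd0_pos).le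
  have hbt : d2 x y / d0 x y ≤ 607 / 500 * ((d0 x y - 1) / d0 x y) := by
    rw [← mul_div_assoc]
    gcongr
    exact d2_le_of_mem_Ioc hx hy
  have ht : (d0 x y - 1) / d0 x y ≤ 289 / 500 := by
    rw [div_le_iff₀ hd0_pos]
    linarith [d0_le_of_mem_Ioc hx hy]
  have hd1 : -d1 x y = d0 x y - 1 + d2 x y := by
    linarith [d0_add_d1_add_d2 (x := x) (y := y) (by linarith [hx.1])]
  convert energy_companion_le hb hbt ht (d0 x y * f) h using 2
  · rw [← neg_mul, hd1]
    field_simp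
  · field_simp

end Energy

section Recursion

variable {r : ℕ → ℝ}

lemma dk3_zero (n : ℕ) : dk3 r n 0 = d0 (r n) (r (n - 1)) := by simp [dk3]

lemma dk3_one (n : ℕ) : dk3 r n 1 = d1 (r n) (r (n - 1)) := by simp [dk3]

lemma dk3_two (n : ℕ) : dk3 r n 2 = d2 (r n) (r (n - 1)) := by simp [dk3]

lemma dk3_eq_zero {j : ℕ} (hj : 3 ≤ j) (n : ℕ) : dk3 r n j = 0 := by
  simp [dk3, show j ≠ 0 by lia, show j ≠ 1 by lia, show j ≠ 2 by lia]

lemma one_lt_dk3_zero (hr : ∀ k, 2 ≤ k → 0 < r k) {n : ℕ} (hn : 3 ≤ n) : 1 < dk3 r n 0 := by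
  rw [dk3_zero]
  exact one_lt_d0 (hr n (by lia)) (hr (n - 1) (by lia))

lemma sum_Icc_mul_dk3 {w : ℕ → ℝ} {n : ℕ} (hw : ∀ i, n < i → w i = 0) (j : ℕ) :
    ∑ i ∈ Finset.Icc (j + 1) n, w i * dk3 r i (i - j)
      = w (j + 1) * dk3 r (j + 1) 1 + w (j + 2) * dk3 r (j + 2) 2 := by
  calc ∑ i ∈ Finset.Icc (j + 1) n, w i * dk3 r i (i - j)
      = ∑ i ∈ Finset.Icc (j + 1) (max n (j + 2)), w i * dk3 r i (i - j) := by
        refine Finset.sum_subset (Finset.Icc_subset_Icc_right (le_max_left _ _)) fun i hi hin => ?_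
        rw [hw i (by simp only [Finset.mem_Icc] at hi hin; lia), zero_mul]
    _ = ∑ i ∈ {j + 1, j + 2}, w i * dk3 r i (i - j) := by
        refine (Finset.sum_subset (fun i hi => ?_) fun i hi hij => ?_).symm
        · simp only [Finset.mem_insert, Finset.mem_singleton] at hi
          simp only [Finset.mem_Icc]
          lia
        · simp only [Finset.mem_Icc, Finset.mem_insert, Finset.mem_singleton] at hi hij
          rw [dk3_eq_zero (by lia), mul_zero]
    _ = w (j + 1) * dk3 r (j + 1) 1 + w (j + 2) * dk3 r (j + 2) 2 := by
        rw [Finset.sum_pair (by lia), Nat.add_sub_cancel_left, Nat.add_sub_cancel_left]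

/-- The adjoint BDF3 recursion `∑ i, w i * d^{(3,i)}_{i-j} = 0` at the index `j`, solved for its
leading term. -/
def BackwardRecursionAt (r w : ℕ → ℝ) (j : ℕ) : Prop :=
  dk3 r j 0 * w j = -(dk3 r (j + 1) 1 * w (j + 1)) - dk3 r (j + 2) 2 * w (j + 2)

lemma energy_le_of_backwardRecursionAt (hr : ∀ k, 2 ≤ k → r k ∈ Set.Ioc 0 (64 / 25))
    {w : ℕ → ℝ} {n : ℕ} (hw : ∀ j, 3 ≤ j → j < n → BackwardRecursionAt r w j) {j m : ℕ}
    (hj : 3 ≤ j) (hjm : j + m = n) :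
    energy (dk3 r j 0 * w j) (dk3 r (j + 1) 2 * w (j + 1))
      ≤ ((999 / 1000) ^ 2) ^ m * energy (dk3 r n 0 * w n) (dk3 r (n + 1) 2 * w (n + 1)) := by
  induction m generalizing j with
  | zero => simp [← hjm]
  | succ m ih =>
    have h_step := energy_step_le (hr (j + 1) (by lia)) (hr j (by lia)) (w (j + 1))
      (dk3 r (j + 2) 2 * w (j + 2))
    have ih := ih (j := j + 1) (by lia) (by lia)
    rw [hw j hj (by lia), dk3_one, dk3_two (j + 1), pow_succ', mul_assoc]
    rw [dk3_zero] at ih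
    exact h_step.trans (by gcongr; exact ih)

end Recursion

/-- `ϑ n j` is the DOC kernel `ϑ^{(3,n)}_{n-j}` of the BDF3 kernels with step ratios `r`. Only the
values with `3 ≤ j ≤ n` are constrained. -/
structure IsBDF3DOCKernel (r : ℕ → ℝ) (ϑ : ℕ → ℕ → ℝ) : Prop where
  diag : ∀ n, 3 ≤ n → ϑ n n = 1 / dk3 r n 0
  recursion : ∀ n j, 3 ≤ j → j < n →
    ϑ n j = -(1 / dk3 r j 0) * ∑ i ∈ Finset.Icc (j + 1) n, ϑ n i * dk3 r i (i - j)

namespace IsBDF3DOCKernel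

variable {r : ℕ → ℝ} {ϑ : ℕ → ℕ → ℝ}

lemma backwardRecursionAt (hϑ : IsBDF3DOCKernel r ϑ) {n j : ℕ} (hd0 : dk3 r j 0 ≠ 0)
    (hj : 3 ≤ j) (hjn : j < n) : BackwardRecursionAt r ((Set.Iic n).indicator (ϑ n)) j := by
  have h_sum : ∑ i ∈ Finset.Icc (j + 1) n, ϑ n i * dk3 r i (i - j)
      = ∑ i ∈ Finset.Icc (j + 1) n, (Set.Iic n).indicator (ϑ n) i * dk3 r i (i - j) :=
    Finset.sum_congr rfl fun i hi => by
      rw [Set.indicator_of_mem (Set.mem_Iic.2 (Finset.mem_Icc.1 hi).2)]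
  have h_support : ∀ i, n < i → (Set.Iic n).indicator (ϑ n) i = 0 := fun i hi =>
    Set.indicator_of_notMem (by simpa using hi) _
  rw [BackwardRecursionAt, Set.indicator_of_mem (Set.mem_Iic.2 hjn.le), hϑ.recursion n j hj hjn,
    h_sum, sum_Icc_mul_dk3 h_support]
  field_simp
  ring

lemma abs_le (hϑ : IsBDF3DOCKernel r ϑ) (hr : ∀ k, 2 ≤ k → r k ∈ Set.Ioc 0 (64 / 25)) {n j : ℕ}
    (hj : 3 ≤ j) (hjn : j ≤ n) : |ϑ n j| ≤ 2 * (999 / 1000) ^ (n - j) := by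
  have hd0 {k : ℕ} (hk : 3 ≤ k) : 1 < dk3 r k 0 := one_lt_dk3_zero (fun i hi => (hr i hi).1) hk
  have h_ne {k : ℕ} (hk : 3 ≤ k) : dk3 r k 0 ≠ 0 := (one_pos.trans (hd0 hk)).ne'
  have h_energy := energy_le_of_backwardRecursionAt hr
    (fun i hi hin => hϑ.backwardRecursionAt (h_ne hi) hi hin) hj (Nat.add_sub_cancel' hjn)
  have h_init : energy (dk3 r n 0 * (Set.Iic n).indicator (ϑ n) n)
      (dk3 r (n + 1) 2 * (Set.Iic n).indicator (ϑ n) (n + 1)) = 1 := by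
    simp [energy, hϑ.diag n (hj.trans hjn), h_ne (hj.trans hjn)]
  rw [h_init, mul_one, Set.indicator_of_mem (Set.mem_Iic.2 hjn)] at h_energy
  have h_sq : (dk3 r j 0 * ϑ n j) ^ 2 ≤ (2 * (999 / 1000) ^ (n - j)) ^ 2 := by
    rw [mul_pow 2, pow_right_comm]
    refine (sq_le_four_mul_energy _ _).trans ((mul_le_mul_of_nonneg_left h_energy ?_).trans_eq ?_)
      <;> norm_num
  calc |ϑ n j| ≤ dk3 r j 0 * |ϑ n j| := le_mul_of_one_le_left (abs_nonneg _) (hd0 hj).le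
    _ = |dk3 r j 0 * ϑ n j| := by rw [abs_mul, abs_of_pos (one_pos.trans (hd0 hj))]
    _ ≤ 2 * (999 / 1000) ^ (n - j) := abs_le_of_sq_le_sq h_sq (by positivity)

lemma diag_mem_Ioc (hϑ : IsBDF3DOCKernel r ϑ) (hr : ∀ k, 2 ≤ k → 0 < r k) {j : ℕ} (hj : 3 ≤ j) :
    ϑ j j ∈ Set.Ioc 0 1 := by
  have hd0 : 1 < dk3 r j 0 := one_lt_dk3_zero hr hj
  rw [hϑ.diag j hj]
  exact ⟨by positivity, div_le_one_of_le₀ hd0.le (by positivity)⟩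

lemma subdiag_eq (hϑ : IsBDF3DOCKernel r ϑ) {j : ℕ} (hj : 3 ≤ j) :
    ϑ (j + 1) j = -dk3 r (j + 1) 1 / dk3 r (j + 1) 0 / dk3 r j 0 := by
  rw [hϑ.recursion (j + 1) j hj (by lia), Finset.Icc_self, Finset.sum_singleton,
    Nat.add_sub_cancel_left, hϑ.diag (j + 1) (by lia)]
  ring

lemma subdiag_mem_Ioc (hϑ : IsBDF3DOCKernel r ϑ) (hr : ∀ k, 2 ≤ k → r k ∈ Set.Ioc 0 (64 / 25))
    {j : ℕ} (hj : 3 ≤ j) : ϑ (j + 1) j ∈ Set.Ioc 0 2 := by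
  have hd0 {k : ℕ} (hk : 3 ≤ k) : 1 < dk3 r k 0 := one_lt_dk3_zero (fun i hi => (hr i hi).1) hk
  have hd0_pos : 0 < dk3 r (j + 1) 0 := one_pos.trans (hd0 (by lia))
  have h_neg_d1 : -dk3 r (j + 1) 1 ∈ Set.Ioc 0 (2 * dk3 r (j + 1) 0) := by
    rw [dk3_one, dk3_zero]
    exact neg_d1_mem_Ioc (hr (j + 1) (by lia)) (hr j (by lia))
  have h_ratio : 0 < -dk3 r (j + 1) 1 / dk3 r (j + 1) 0 := div_pos h_neg_d1.1 hd0_pos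
  rw [hϑ.subdiag_eq hj]
  exact ⟨div_pos h_ratio (one_pos.trans (hd0 hj)),
    (div_le_self h_ratio.le (hd0 hj).le).trans ((div_le_iff₀ hd0_pos).2 h_neg_d1.2)⟩

end IsBDF3DOCKernel

lemma le_of_sextic_eq_zero {x : ℝ}
    (hx : x ^ 6 + x ^ 5 - 4 * x ^ 4 - 8 * x ^ 3 - 10 * x ^ 2 - 6 * x - 2 = 0) : x ≤ 64 / 25 := by
  by_contra! h
  obtain ⟨e, he, rfl⟩ : ∃ e, 0 < e ∧ x = e + 64 / 25 := ⟨x - 64 / 25, by linarith, by ring⟩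
  -- The Taylor coefficients of the sextic at `64 / 25` are all positive.
  refine hx.not_gt ?_
  ring_nf
  positivity

theorem bdf3_doc_decay_general {r : ℕ → ℝ} (hr : ∀ k, 2 ≤ k → r k ∈ Set.Ioc 0 (64 / 25))
    {ϑ : ℕ → ℕ → ℝ} (hϑ : IsBDF3DOCKernel r ϑ) :
    (∀ n j, 3 ≤ j → j + 2 ≤ n → |ϑ n j| ≤ 2 * (999 / 1000) ^ (n - j - 1)) ∧
      ∀ j, 3 ≤ j →
        ϑ j j = 1 / dk3 r j 0 ∧ 0 < ϑ j j ∧ ϑ j j ≤ 1 ∧ 0 < ϑ (j + 1) j ∧ ϑ (j + 1) j ≤ 2 := by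
  refine ⟨fun n j hj hjn => ?_, fun j hj => ?_⟩
  · calc |ϑ n j| ≤ 2 * (999 / 1000) ^ (n - j) := hϑ.abs_le hr hj (by lia)
      _ ≤ 2 * (999 / 1000) ^ (n - j - 1) := by
        gcongr 2 * ?_
        exact pow_le_pow_of_le_one (by norm_num) (by norm_num) (Nat.sub_le _ 1)
  · have h_diag := hϑ.diag_mem_Ioc (fun k hk => (hr k hk).1) hj
    have h_subdiag := hϑ.subdiag_mem_Ioc hr hj
    exact ⟨hϑ.diag j hj, h_diag.1, h_diag.2, h_subdiag.1, h_subdiag.2⟩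

/-- Exponential decay of the BDF3 DOC kernels: if all step ratios satisfy
`0 < r_k ≤ R' < R₃`, where `R₃` is the unique positive root of
`R⁶+R⁵-4R⁴-8R³-10R²-6R-2 = 0`, then there exist constants `c > 0` and `δ ∈ (0,1)`
depending only on `R'` such that, writing `ϑ n j` for `ϑ^{(3,n)}_{n-j}`,
`|ϑ^{(3,n)}_{n-j}| ≤ c δ^{n-j-1}` for all `n ≥ j+2 ≥ 5`; moreover
`ϑ^{(3,j)}_0 = 1/d^{(3,j)}_0 ∈ (0,1]` and `ϑ^{(3,j+1)}_1 ∈ (0,2]` for all `j ≥ 3`. -/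
theorem bdf3_doc_decay (R' R3 : ℝ) (hR3pos : 0 < R3)
    (hR3root : R3^6 + R3^5 - 4*R3^4 - 8*R3^3 - 10*R3^2 - 6*R3 - 2 = 0)
    (hR3uniq : ∀ x : ℝ, 0 < x → x^6 + x^5 - 4*x^4 - 8*x^3 - 10*x^2 - 6*x - 2 = 0 → x = R3)
    (hR' : R' < R3) :
    ∃ c δ : ℝ, 0 < c ∧ 0 < δ ∧ δ < 1 ∧
      ∀ (r : ℕ → ℝ), (∀ k, 2 ≤ k → 0 < r k ∧ r k ≤ R') →
      ∀ (ϑ : ℕ → ℕ → ℝ),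
        (∀ n, 3 ≤ n → ϑ n n = 1 / dk3 r n 0) →
        (∀ n j, 3 ≤ j → j < n →
          ϑ n j = -(1 / dk3 r j 0) * ∑ i ∈ Finset.Icc (j+1) n, ϑ n i * dk3 r i (i - j)) →
        (∀ n j, 3 ≤ j → j + 2 ≤ n → |ϑ n j| ≤ c * δ^(n - j - 1)) ∧
        (∀ j, 3 ≤ j →
          ϑ j j = 1 / dk3 r j 0 ∧ 0 < ϑ j j ∧ ϑ j j ≤ 1 ∧
            0 < ϑ (j+1) j ∧ ϑ (j+1) j ≤ 2) :=
  ⟨2, 999 / 1000, by norm_num, by norm_num, by norm_num, fun _ hr _ hdiag hrec =>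
    bdf3_doc_decay_general (fun k hk => ⟨(hr k hk).1,
      (hr k hk).2.trans (hR'.le.trans (le_of_sextic_eq_zero hR3root))⟩) ⟨hdiag, hrec⟩⟩
end
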